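/- Let A ⊆ ℝ² be a finite s-distance set with s ≥ 3 contained in the zero set of y² − f(x), where f is a cubic polynomial. Then |A| ≤ 3s. -/

import Mathlib

noncomputable section

/-- The set of nonzero distances determined by a set `A` in Euclidean space. -/
def distSet {n : ℕ} (A : Set (EuclideanSpace ℝ (Fin n))) : Set ℝ :=
  {d | ∃ p ∈ A, ∃ q ∈ A, p ≠ q ∧ dist p q = d}

/-!
Let `V` be the space of functions on `A` induced by polynomials of degree at most `s`, and let
`g : A → ℝ` be orthogonal to `V`. The polynomial `K(x, y) = ∏ (δ² - ‖x - y‖²)`, the product being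
over the nonzero distances `δ` of `A`, has degree at most `2s`. Each of its monomials has degree at
most `s` in `x` or in `y`, so `∑ g(a) g(b) K(a, b) = 0` (the Croot–Lev–Pach argument). But `K`
vanishes off the diagonal of `A × A` and is positive on it, so `g = 0`. Hence `V = ℝ^A` and
`|A| = dim V`, as observed by Petrov and Pohoata.

If `A` lies on a hypersurface `P = 0` of degree `d ≤ s` in `ℝⁿ`, the multiples of `P` induce zero
and `dim V ≤ C(s + n, n) - C(s - d + n, n)`, which is `3s` for plane cubics.
-/

section PolynomialMethod

open MvPolynomial Module

theorem card_finsupp_degree_le (σ : Type*) [Fintype σ] (m : ℕ) :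
    Nat.card {k : σ →₀ ℕ | (k.sum fun _ e => e) ≤ m} =
      (m + Fintype.card σ).choose (Fintype.card σ) := by
  classical
  have union_eq : {k : σ →₀ ℕ | (k.sum fun _ e => e) ≤ m} =
      ((Finset.range (m + 1)).biUnion fun i => (Finset.univ : Finset σ).finsuppAntidiag i) := by
    ext k
    simp [Finsupp.sum_fintype]
  rw [union_eq, Nat.card_coe_set_eq, Set.ncard_coe_finset, Finset.card_biUnion]
  · simp only [Finset.card_finsuppAntidiag_nat_eq_multichoose, Finset.card_univ,
      Nat.sum_range_multichoose]
  · intro i _ j _ hij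
    exact Finset.disjoint_left.2 fun k hi hj => hij <|
      (Finset.mem_finsuppAntidiag.1 hi).1.symm.trans (Finset.mem_finsuppAntidiag.1 hj).1

theorem finrank_restrictTotalDegree (σ R : Type*) [Fintype σ] [CommRing R] [Nontrivial R] (m : ℕ) :
    finrank R (restrictTotalDegree σ R m) = (m + Fintype.card σ).choose (Fintype.card σ) := by
  rw [restrictTotalDegree, finrank_eq_nat_card_basis (basisRestrictSupport R _),
    card_finsupp_degree_le]

/-- Evaluation of the polynomials of total degree at most `s` at a family `x` of points of affine
space. The dimension of its range is the value at `s` of the affine Hilbert function of `x`. -/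
def evalDegreeLE {ι σ R : Type*} [CommSemiring R] (x : ι → σ → R) (s : ℕ) :
    restrictTotalDegree σ R s →ₗ[R] ι → R :=
  LinearMap.pi fun a => (aeval (x a)).toLinearMap ∘ₗ (restrictTotalDegree σ R s).subtype

@[simp]
theorem evalDegreeLE_apply {ι σ R : Type*} [CommSemiring R] (x : ι → σ → R) (s : ℕ)
    (p : restrictTotalDegree σ R s) (a : ι) : evalDegreeLE x s p a = eval (x a) p.1 := by
  simp [evalDegreeLE, aeval_eq_eval]

section Hypersurface

variable {ι σ F : Type*} [Fintype σ] [Field F] {x : ι → σ → F} {P : MvPolynomial σ F} {d s : ℕ}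

theorem choose_le_finrank_ker_evalDegreeLE (hP : P ≠ 0) (hx : ∀ a, eval (x a) P = 0)
    (hd : P.totalDegree ≤ d) (hs : d ≤ s) :
    (s - d + Fintype.card σ).choose (Fintype.card σ) ≤
      finrank F (LinearMap.ker (evalDegreeLE x s)) := by
  have mul_mem : ∀ q ∈ restrictTotalDegree σ F (s - d),
      LinearMap.mulLeft F P q ∈ restrictTotalDegree σ F s := by
    intro q hq
    rw [mem_restrictTotalDegree] at hq ⊢
    calc (P * q).totalDegree ≤ P.totalDegree + q.totalDegree := totalDegree_mul P q
      _ ≤ d + (s - d) := add_le_add hd hq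
      _ = s := Nat.add_sub_cancel' hs
  let mulP := (LinearMap.mulLeft F P).restrict mul_mem
  have mulP_injective : Function.Injective mulP := fun p q h =>
    Subtype.ext <| mul_left_cancel₀ hP <| congrArg Subtype.val h
  have range_le_ker : LinearMap.range mulP ≤ LinearMap.ker (evalDegreeLE x s) := by
    rintro _ ⟨q, rfl⟩
    ext a
    simp [mulP, hx]
  rw [← finrank_restrictTotalDegree σ F, ← LinearMap.finrank_range_of_inj mulP_injective]
  exact Submodule.finrank_mono range_le_ker

theorem finrank_range_evalDegreeLE_add_choose_le (hP : P ≠ 0) (hx : ∀ a, eval (x a) P = 0)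
    (hd : P.totalDegree ≤ d) (hs : d ≤ s) :
    finrank F (LinearMap.range (evalDegreeLE x s)) +
        (s - d + Fintype.card σ).choose (Fintype.card σ) ≤
      (s + Fintype.card σ).choose (Fintype.card σ) := by
  rw [← finrank_restrictTotalDegree σ F s,
    ← (evalDegreeLE x s).finrank_range_add_finrank_ker]
  exact Nat.add_le_add_left (choose_le_finrank_ker_evalDegreeLE hP hx hd hs) _

end Hypersurface

theorem exists_sumElim_of_degree_le {σ τ : Type*} {s t : ℕ} {k : σ ⊕ τ →₀ ℕ}
    (hk : (k.sum fun _ e => e) ≤ s + t + 1) :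
    ∃ (k₁ : σ →₀ ℕ) (k₂ : τ →₀ ℕ), k = k₁.sumElim k₂ ∧
      ((k₁.sum fun _ e => e) ≤ s ∨ (k₂.sum fun _ e => e) ≤ t) := by
  refine ⟨_, _, (Finsupp.comapDomain_sumElim_comapDomain k).symm, ?_⟩
  rw [← Finsupp.comapDomain_sumElim_comapDomain k, Finsupp.sum_sumElim] at hk
  simp only [Function.comp_def] at hk
  omega

theorem eval_sumElim_monomial {σ τ R : Type*} [CommSemiring R] (x : σ → R) (y : τ → R)
    (k₁ : σ →₀ ℕ) (k₂ : τ →₀ ℕ) (c : R) :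
    eval (Sum.elim x y) (monomial (k₁.sumElim k₂) c) =
      c * (eval x (monomial k₁ 1) * eval y (monomial k₂ 1)) := by
  simp [eval_monomial, Finsupp.prod_sumElim, Function.comp_def]

section CrootLevPach

variable {ι κ σ τ R : Type*} [Fintype ι] [Fintype κ] [CommSemiring R]

theorem sum_sum_mul_eval_sumElim_monomial (x : ι → σ → R) (y : κ → τ → R) (g : ι → R) (h : κ → R)
    (k₁ : σ →₀ ℕ) (k₂ : τ →₀ ℕ) (c : R) :
    ∑ a, ∑ b, g a * h b * eval (Sum.elim (x a) (y b)) (monomial (k₁.sumElim k₂) c) =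
      c * ((∑ a, g a * eval (x a) (monomial k₁ 1)) *
        ∑ b, h b * eval (y b) (monomial k₂ 1)) := by
  rw [Finset.sum_mul_sum]
  simp only [Finset.mul_sum, eval_sumElim_monomial]
  refine Finset.sum_congr rfl fun a _ => Finset.sum_congr rfl fun b _ => ?_
  ring

theorem sum_sum_mul_eval_sumElim_eq_zero {x : ι → σ → R} {y : κ → τ → R} {g : ι → R} {h : κ → R}
    {s t : ℕ}
    (hg : ∀ p : MvPolynomial σ R, p.totalDegree ≤ s → ∑ a, g a * eval (x a) p = 0)
    (hh : ∀ p : MvPolynomial τ R, p.totalDegree ≤ t → ∑ b, h b * eval (y b) p = 0)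
    {K : MvPolynomial (σ ⊕ τ) R} (hK : K.totalDegree ≤ s + t + 1) :
    ∑ a, ∑ b, g a * h b * eval (Sum.elim (x a) (y b)) K = 0 := by
  have sum_monomial : ∀ k ∈ K.support,
      ∑ a, ∑ b, g a * h b * eval (Sum.elim (x a) (y b)) (monomial k (coeff k K)) = 0 := by
    intro k hk
    obtain ⟨k₁, k₂, rfl, h₁ | h₂⟩ := exists_sumElim_of_degree_le ((le_totalDegree hk).trans hK)
    · rw [sum_sum_mul_eval_sumElim_monomial, hg _ ((totalDegree_monomial_le k₁ 1).trans h₁),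
        zero_mul, mul_zero]
    · rw [sum_sum_mul_eval_sumElim_monomial, hh _ ((totalDegree_monomial_le k₂ 1).trans h₂),
        mul_zero, mul_zero]
  calc ∑ a, ∑ b, g a * h b * eval (Sum.elim (x a) (y b)) K
      = ∑ k ∈ K.support, ∑ a, ∑ b,
          g a * h b * eval (Sum.elim (x a) (y b)) (monomial k (coeff k K)) := by
        conv_lhs => rw [K.as_sum]
        simp_rw [map_sum, Finset.mul_sum]
        rw [Finset.sum_comm (s := K.support)]
        exact Finset.sum_congr rfl fun a _ => Finset.sum_comm
    _ = 0 := Finset.sum_eq_zero sum_monomial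

end CrootLevPach

theorem eq_top_of_dotProduct_eq_zero {ι F : Type*} [Fintype ι] [Field F]
    {W : Submodule F (ι → F)} (hW : ∀ g : ι → F, (∀ w ∈ W, g ⬝ᵥ w = 0) → g = 0) : W = ⊤ := by
  classical
  by_contra hne
  obtain ⟨φ, hφ, hker⟩ := W.exists_le_ker_of_lt_top (lt_top_iff_ne_top.2 hne)
  obtain ⟨g, rfl⟩ := (dotProductEquiv F ι).surjective φ
  exact hφ (by rw [hW g fun w hw => hker hw, map_zero])

theorem evalDegreeLE_surjective_of_diagonal {ι σ F : Type*} [Finite ι] [Field F] [LinearOrder F]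
    [IsStrictOrderedRing F] {x : ι → σ → F} {s : ℕ} {K : MvPolynomial (σ ⊕ σ) F}
    (hK : K.totalDegree ≤ 2 * s + 1) (hpos : ∀ a, 0 < eval (Sum.elim (x a) (x a)) K)
    (hzero : ∀ a b, a ≠ b → eval (Sum.elim (x a) (x b)) K = 0) :
    Function.Surjective (evalDegreeLE x s) := by
  have := Fintype.ofFinite ι
  rw [← LinearMap.range_eq_top]
  refine eq_top_of_dotProduct_eq_zero fun g hg => ?_
  have sum_eval (p : MvPolynomial σ F) (hp : p.totalDegree ≤ s) : ∑ a, g a * eval (x a) p = 0 := by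
    rw [← mem_restrictTotalDegree] at hp
    simpa only [dotProduct, evalDegreeLE_apply] using
      hg (evalDegreeLE x s ⟨p, hp⟩) (LinearMap.mem_range_self _ _)
  have sum_diagonal : ∑ a, g a * g a * eval (Sum.elim (x a) (x a)) K = 0 := by
    rw [← sum_sum_mul_eval_sumElim_eq_zero sum_eval sum_eval (hK.trans_eq (by ring))]
    refine Finset.sum_congr rfl fun a _ => ?_
    symm
    exact Fintype.sum_eq_single a fun b hba => by rw [hzero a b hba.symm, mul_zero]
  rw [Finset.sum_eq_zero_iff_of_nonneg fun a _ =>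
    mul_nonneg (mul_self_nonneg (g a)) (hpos a).le] at sum_diagonal
  funext a
  simpa [(hpos a).ne'] using sum_diagonal a (Finset.mem_univ a)

/-- The polynomial `∏ d ∈ D, (d² - ‖x - y‖²)` in the coordinates of two points `x` and `y`. It
vanishes at the pairs of points whose distance lies in `D`. -/
def distanceAnnihilator (σ : Type*) {R : Type*} [Fintype σ] [CommRing R] (D : Finset R) :
    MvPolynomial (σ ⊕ σ) R :=
  ∏ d ∈ D, (C (d ^ 2) - ∑ i, (X (Sum.inl i) - X (Sum.inr i)) ^ 2)

theorem totalDegree_distanceAnnihilator_le (σ : Type*) {R : Type*} [Fintype σ] [CommRing R]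
    [Nontrivial R] (D : Finset R) : (distanceAnnihilator σ D).totalDegree ≤ 2 * D.card := by
  have totalDegree_sq_sub_le (i : σ) :
      ((X (Sum.inl i) - X (Sum.inr i)) ^ 2 : MvPolynomial (σ ⊕ σ) R).totalDegree ≤ 2 :=
    (totalDegree_pow _ 2).trans <| Nat.mul_le_mul_left 2 <|
      (totalDegree_sub _ _).trans <| max_le (totalDegree_X _).le (totalDegree_X _).le
  have totalDegree_factor_le (d : R) : (C (d ^ 2) - ∑ i, (X (Sum.inl i) - X (Sum.inr i)) ^ 2 :
      MvPolynomial (σ ⊕ σ) R).totalDegree ≤ 2 :=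
    (totalDegree_sub _ _).trans <| max_le ((totalDegree_C _).trans_le zero_le_two) <|
      totalDegree_finsetSum_le fun i _ => totalDegree_sq_sub_le i
  calc (distanceAnnihilator σ D).totalDegree
      ≤ ∑ d ∈ D, (C (d ^ 2) - ∑ i, (X (Sum.inl i) - X (Sum.inr i)) ^ 2 :
          MvPolynomial (σ ⊕ σ) R).totalDegree := totalDegree_finsetProd D _
    _ ≤ D.card * 2 := Finset.sum_le_card_nsmul D _ 2 fun d _ => totalDegree_factor_le d
    _ = 2 * D.card := mul_comm _ _

theorem eval_distanceAnnihilator {n : ℕ} (D : Finset ℝ) (p q : EuclideanSpace ℝ (Fin n)) :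
    eval (Sum.elim p q) (distanceAnnihilator (Fin n) D) = ∏ d ∈ D, (d ^ 2 - dist p q ^ 2) := by
  simp [distanceAnnihilator, EuclideanSpace.dist_sq_eq, Real.dist_eq]

theorem finite_distSet {n : ℕ} {A : Set (EuclideanSpace ℝ (Fin n))} (hA : A.Finite) :
    (distSet A).Finite :=
  (hA.image2 dist hA).subset <| by
    rintro d ⟨p, hp, q, hq, -, rfl⟩
    exact Set.mem_image2_of_mem hp hq

theorem pos_of_mem_distSet {n : ℕ} {A : Set (EuclideanSpace ℝ (Fin n))} {d : ℝ}
    (hd : d ∈ distSet A) : 0 < d := by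
  obtain ⟨p, -, q, -, hpq, rfl⟩ := hd
  exact dist_pos.2 hpq

theorem evalDegreeLE_surjective_of_ncard_distSet_le {n s : ℕ}
    {A : Finset (EuclideanSpace ℝ (Fin n))}
    (hA : (distSet (A : Set (EuclideanSpace ℝ (Fin n)))).ncard ≤ s) :
    Function.Surjective (evalDegreeLE (fun a : A => a.1.ofLp) s) := by
  have finite_dist := finite_distSet A.finite_toSet
  set D := finite_dist.toFinset
  have card_D : D.card ≤ s := by rwa [← Set.ncard_eq_toFinset_card _ finite_dist]
  refine evalDegreeLE_surjective_of_diagonal (K := distanceAnnihilator (Fin n) D) ?_ ?_ ?_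
  · have := totalDegree_distanceAnnihilator_le (Fin n) D
    omega
  · intro a
    rw [eval_distanceAnnihilator, dist_self]
    refine Finset.prod_pos fun d hd => ?_
    have d_pos := pos_of_mem_distSet (finite_dist.mem_toFinset.1 hd)
    simpa using pow_pos d_pos 2
  · intro a b hab
    have dist_mem : dist a.1 b.1 ∈ D :=
      finite_dist.mem_toFinset.2 ⟨a, a.2, b, b.2, Subtype.coe_injective.ne hab, rfl⟩
    rw [eval_distanceAnnihilator]
    exact Finset.prod_eq_zero dist_mem (sub_self _)

theorem sdist_on_elliptic_curve_general {n d s : ℕ} (hs : d ≤ s) {P : MvPolynomial (Fin n) ℝ}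
    (hP : P ≠ 0) (hd : P.totalDegree ≤ d) {A : Finset (EuclideanSpace ℝ (Fin n))}
    (hA : (distSet (A : Set (EuclideanSpace ℝ (Fin n)))).ncard ≤ s)
    (hvanish : ∀ a ∈ A, eval a P = 0) :
    A.card + (s - d + n).choose n ≤ (s + n).choose n := by
  have range_eq_top := LinearMap.range_eq_top.2 (evalDegreeLE_surjective_of_ncard_distSet_le hA)
  have finrank_le := finrank_range_evalDegreeLE_add_choose_le (x := fun a : A => a.1.ofLp) hP
    (fun a => hvanish a a.2) hd hs
  rw [range_eq_top] at finrank_le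
  simpa using finrank_le

/-- The plane curve `y² = f(x)`, as a polynomial in `x = X 0` and `y = X 1`. -/
def weierstrassPolynomial {R : Type*} [CommRing R] (f : Polynomial R) : MvPolynomial (Fin 2) R :=
  X 1 ^ 2 - f.toMvPolynomial 0

@[simp]
theorem eval_weierstrassPolynomial {R : Type*} [CommRing R] (f : Polynomial R) (x : Fin 2 → R) :
    eval x (weierstrassPolynomial f) = x 1 ^ 2 - f.eval (x 0) := by
  simp [weierstrassPolynomial]

theorem weierstrassPolynomial_ne_zero {R : Type*} [CommRing R] [Nontrivial R] (f : Polynomial R) :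
    weierstrassPolynomial f ≠ 0 := by
  -- On the line `x = 0` the curve is cut out by the monic quadratic `y² - f(0)`.
  intro h
  have eval_zero_X := congrArg (aeval ![0, (Polynomial.X : Polynomial R)]) h
  rw [weierstrassPolynomial, map_sub, aeval_toMvPolynomial, map_zero] at eval_zero_X
  refine Polynomial.X_pow_sub_C_ne_zero two_pos (f.coeff 0) ?_
  simpa [Polynomial.aeval_def, Polynomial.eval₂_at_zero] using eval_zero_X

theorem totalDegree_toMvPolynomial_le {σ R : Type*} [CommSemiring R] [Nontrivial R] (i : σ)
    (f : Polynomial R) :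
    (f.toMvPolynomial i).totalDegree ≤ f.natDegree := by
  rw [Polynomial.toMvPolynomial, Polynomial.aeval_eq_sum_range]
  refine totalDegree_finsetSum_le fun k hk => ?_
  calc (f.coeff k • X i ^ k : MvPolynomial σ R).totalDegree
      ≤ (X i ^ k : MvPolynomial σ R).totalDegree := totalDegree_smul_le _ _
    _ = k := totalDegree_X_pow i k
    _ ≤ f.natDegree := Nat.lt_succ_iff.1 (Finset.mem_range.1 hk)

theorem totalDegree_weierstrassPolynomial_le {R : Type*} [CommRing R] [Nontrivial R]
    (f : Polynomial R) :
    (weierstrassPolynomial f).totalDegree ≤ max 2 f.natDegree :=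
  (totalDegree_sub _ _).trans <|
    max_le_max (totalDegree_X_pow 1 2).le (totalDegree_toMvPolynomial_le 0 f)

end PolynomialMethod

theorem add_two_choose_two_eq {s : ℕ} (hs : 3 ≤ s) :
    (s + 2).choose 2 = 3 * s + (s - 3 + 2).choose 2 := by
  obtain ⟨t, rfl⟩ := Nat.exists_eq_add_of_le' hs
  simp only [Nat.add_sub_cancel, Nat.choose_succ_succ', zero_add, Nat.choose_one_right,
    Nat.choose_zero_right]
  omega

/-- An `s`-distance set (`s ≥ 3`) on an elliptic curve `y² = f(x)` with `f` cubic
has at most `3s` points. -/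
theorem sdist_on_elliptic_curve {s : ℕ} (hs : 3 ≤ s) (f : Polynomial ℝ)
    (hf : f.natDegree = 3)
    (A : Finset (EuclideanSpace ℝ (Fin 2)))
    (hA : (distSet (A : Set (EuclideanSpace ℝ (Fin 2)))).ncard ≤ s)
    (hcurve : ∀ a ∈ A, (a 1) ^ 2 = f.eval (a 0)) :
    A.card ≤ 3 * s := by
  have := sdist_on_elliptic_curve_general hs (weierstrassPolynomial_ne_zero f)
    ((totalDegree_weierstrassPolynomial_le f).trans (by simp [hf])) hA
    (fun a ha => by simp [hcurve a ha])
  rw [add_two_choose_two_eq hs] at this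
  exact Nat.le_of_add_le_add_right this
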